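/- Let n ≥ 1 and let H ∈ ℂ[x,y] be a polynomial of degree n+1 that is regular at infinity, with H(0,0) = 0. If the origin (0,0) is the only critical point of H in ℂ², then H is homogeneous: H coincides with its principal homogeneous part Ĥ. -/

import Mathlib

open MvPolynomial Finset

/-- A polynomial `H` of degree `n+1` is regular at infinity if its principal
homogeneous part `Ĥ` has an isolated critical point at the origin: `(0,0)` is
the only common zero of `Ĥ_x` and `Ĥ_y` in `ℂ²`. -/
def RegularAtInfinity (n : ℕ) (H : MvPolynomial (Fin 2) ℂ) : Prop :=
  ∀ x y : ℂ,
    eval ![x, y] (pderiv 0 (homogeneousComponent (n + 1) H)) = 0 →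
    eval ![x, y] (pderiv 1 (homogeneousComponent (n + 1) H)) = 0 →
    x = 0 ∧ y = 0

/-!
Write `fᵢ = ∂H/∂xᵢ` and `E = (n + 1) H - ∑ xᵢ fᵢ`; it suffices that the Euler defect `E` vanishes.
Since the leading forms of the `fᵢ` have no common zero but the origin, `f` is a finite surjective
map, so `E`, unless it is `0`, divides some nonzero polynomial in the `fᵢ`. It is thus enough to
show that `E` vanishes on the inverse image under `f` of every line `{s w}` through the origin.

That inverse image is parametrized by a curve finite over the `s`-line, on which we follow `E / s`.
Where `s ≠ 0`, it is regular. At a place with `s = 0` all `fᵢ = s wᵢ` vanish, so the curve passes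
through the origin; there `dH = ∑ fᵢ dxᵢ` forces `H` to vanish to higher order than `s`, and so do
the `xᵢ fᵢ`, hence `E / s` is regular and vanishes. At infinity, `max |xᵢ| ^ n` is bounded by `|s|`
because the leading forms of the `fᵢ` have no common zero, and `E` has degree at most `n`, so
`E / s` is bounded. A function regular at all places is constant, and this one has a zero.
-/

section HomogeneousComponents

variable {σ R : Type*} [CommRing R]

theorem homogeneousComponent_pderiv (n : ℕ) (i : σ) (p : MvPolynomial σ R) :
    homogeneousComponent n (pderiv i p) = pderiv i (homogeneousComponent (n + 1) p) := by
  ext m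
  simp only [coeff_homogeneousComponent, coeff_pderiv, map_add, Finsupp.degree_single,
    Nat.add_right_cancel_iff, ite_mul, zero_mul]

theorem totalDegree_le_of_forall_coeff_eq_zero {p : MvPolynomial σ R} {n : ℕ}
    (h : ∀ m : σ →₀ ℕ, n < m.degree → coeff m p = 0) : p.totalDegree ≤ n :=
  Finset.sup_le fun m hm => by
    by_contra! hn
    exact mem_support_iff.mp hm (h m hn)

theorem totalDegree_pderiv_le {p : MvPolynomial σ R} {n : ℕ} (i : σ)
    (hp : p.totalDegree ≤ n + 1) : (pderiv i p).totalDegree ≤ n :=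
  totalDegree_le_of_forall_coeff_eq_zero fun m hm => by
    have hm' : p.totalDegree < (m + Finsupp.single i 1).degree := by
      rw [map_add, Finsupp.degree_single]
      omega
    rw [coeff_pderiv, coeff_eq_zero_of_totalDegree_lt hm', zero_mul]

theorem totalDegree_sub_homogeneousComponent_lt {p : MvPolynomial σ R} {n : ℕ}
    (hp : p.totalDegree ≤ n) (hn : 0 < n) : (p - homogeneousComponent n p).totalDegree < n :=
  Nat.lt_of_le_sub_one hn <| totalDegree_le_of_forall_coeff_eq_zero fun m hm => by
    rw [coeff_sub, coeff_homogeneousComponent]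
    split_ifs with h
    · rw [sub_self]
    · have hm' : p.totalDegree < m.degree := by omega
      rw [coeff_eq_zero_of_totalDegree_lt hm', sub_zero]

theorem totalDegree_map_le {S : Type*} [CommRing S] (φ : R →+* S) (p : MvPolynomial σ R) :
    (map φ p).totalDegree ≤ p.totalDegree :=
  totalDegree_le_of_forall_coeff_eq_zero fun m hm => by
    rw [coeff_map, coeff_eq_zero_of_totalDegree_lt hm, map_zero]

theorem homogeneousComponent_map {S : Type*} [CommRing S] (φ : R →+* S) (n : ℕ)
    (p : MvPolynomial σ R) :
    homogeneousComponent n (map φ p) = map φ (homogeneousComponent n p) := by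
  ext m
  simp only [coeff_homogeneousComponent, coeff_map, apply_ite φ, map_zero]

theorem aeval_smul_of_isHomogeneous {S : Type*} [CommRing S] [Algebra R S] {p : MvPolynomial σ R}
    {d : ℕ} (hp : p.IsHomogeneous d) (c : S) (x : σ → S) :
    aeval (c • x) p = c ^ d * aeval x p := by
  simp only [aeval_def, eval₂_eq, Finset.mul_sum]
  refine Finset.sum_congr rfl fun m hm => ?_
  have hd : m.degree = d := by
    rw [Finsupp.degree_eq_weight_one]
    exact hp (mem_support_iff.mp hm)
  simp only [Pi.smul_apply, smul_eq_mul, mul_pow, Finset.prod_mul_distrib,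
    Finset.prod_pow_eq_pow_sum]
  rw [← Finsupp.degree_apply, hd]
  ring

end HomogeneousComponents

section EulerDefect

variable {σ R : Type*} [CommRing R]

theorem coeff_X_mul_pderiv (i : σ) (p : MvPolynomial σ R) (m : σ →₀ ℕ) :
    coeff m (X i * pderiv i p) = m i * coeff m p := by
  induction p using MvPolynomial.induction_on' with
  | monomial u a =>
    classical
    rw [X_mul_pderiv_monomial, coeff_smul, coeff_monomial, nsmul_eq_mul]
    split_ifs with h
    · rw [h]
    · rw [mul_zero, mul_zero]
  | add p q hp hq => rw [map_add, mul_add, coeff_add, hp, hq, coeff_add, mul_add]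

variable [Fintype σ]

/-- The defect `d H - ∑ xᵢ ∂H/∂xᵢ` of `H` in Euler's identity, which measures how far `H` is from
being a form of degree `d`. -/
noncomputable def eulerDefect (d : ℕ) (H : MvPolynomial σ R) : MvPolynomial σ R :=
  d * H - ∑ i, X i * pderiv i H

theorem coeff_eulerDefect (d : ℕ) (H : MvPolynomial σ R) (m : σ →₀ ℕ) :
    coeff m (eulerDefect d H) = (d - m.degree) * coeff m H := by
  rw [eulerDefect, coeff_sub, coeff_sum, ← nsmul_eq_mul, coeff_smul, nsmul_eq_mul, sub_mul,
    Finsupp.degree_eq_sum, Nat.cast_sum, Finset.sum_mul]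
  simp only [coeff_X_mul_pderiv]

theorem totalDegree_eulerDefect_le {n : ℕ} {H : MvPolynomial σ R} (hH : H.totalDegree ≤ n + 1) :
    (eulerDefect (n + 1) H).totalDegree ≤ n :=
  totalDegree_le_of_forall_coeff_eq_zero fun m hm => by
    rw [coeff_eulerDefect]
    rcases (Nat.succ_le_of_lt hm).eq_or_lt with h | h
    · rw [← h, sub_self, zero_mul]
    · rw [coeff_eq_zero_of_totalDegree_lt (hH.trans_lt h), mul_zero]

theorem isHomogeneous_of_eulerDefect_eq_zero [IsDomain R] [CharZero R] {d : ℕ}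
    {H : MvPolynomial σ R} (hE : eulerDefect d H = 0) : H.IsHomogeneous d := by
  intro m hm
  have h : ((d : R) - m.degree) * coeff m H = 0 := by rw [← coeff_eulerDefect, hE, coeff_zero]
  have h' := (mul_eq_zero.mp h).resolve_right hm
  rw [Finsupp.degree_eq_weight_one, sub_eq_zero] at h'
  exact_mod_cast h'.symm

end EulerDefect

section Valuation

variable {σ R L Γ₀ : Type*} [CommRing R] [Field L] [Algebra R L]
  [LinearOrderedCommGroupWithZero Γ₀] {v : Valuation L Γ₀}

theorem valuation_aeval_le_pow (hv : ∀ c : R, v (algebraMap R L c) ≤ 1) {x : σ → L} {M : Γ₀}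
    (hM : 1 ≤ M) (hx : ∀ i, v (x i) ≤ M) {p : MvPolynomial σ R} {d : ℕ} (hp : p.totalDegree ≤ d) :
    v (aeval x p) ≤ M ^ d := by
  rw [aeval_def, eval₂_eq]
  refine v.map_sum_le fun m hm => ?_
  have hprod : ∏ i ∈ m.support, v (x i) ^ m i ≤ M ^ m.degree := by
    rw [Finsupp.degree_apply, ← Finset.prod_pow_eq_pow_sum]
    exact Finset.prod_le_prod' fun i _ => pow_le_pow_left' (hx i) _
  calc v (algebraMap R L (coeff m p) * ∏ i ∈ m.support, x i ^ m i)
      = v (algebraMap R L (coeff m p)) * ∏ i ∈ m.support, v (x i) ^ m i := by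
        rw [map_mul, map_prod]
        simp only [map_pow]
    _ ≤ 1 * M ^ d := mul_le_mul' (hv _) <|
        hprod.trans (pow_le_pow_right₀ hM ((le_totalDegree hm).trans hp))
    _ = M ^ d := one_mul _

theorem isIntegral_of_forall_mem_valuationSubring {y : L}
    (h : ∀ V : ValuationSubring L, (∀ r : R, algebraMap R L r ∈ V) → y ∈ V) : IsIntegral R y := by
  by_contra hy
  obtain ⟨V, hV, hyV⟩ := Subring.exists_le_valuationSubring_of_isIntegrallyClosedIn
    (R := (integralClosure R L).toSubring) hy
  exact hyV (h V fun r => hV (algebraMap_mem (integralClosure R L) r))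

theorem mem_valuationSubring_of_isIntegral {V : ValuationSubring L}
    (hV : ∀ r : R, algebraMap R L r ∈ V) {y : L} (hy : IsIntegral R y) : y ∈ V := by
  have hy' : IsIntegral V y := RingHom.IsIntegralElem.of_comp
    (f := (algebraMap R L).codRestrict V hV) (g := algebraMap V L) hy
  obtain ⟨z, rfl⟩ := IsIntegrallyClosed.isIntegral_iff.mp hy'
  exact z.2

theorem algebraMap_polynomial_mem_valuationSubring [Algebra (Polynomial R) L]
    [IsScalarTower R (Polynomial R) L] {V : ValuationSubring L}
    (hR : ∀ c : R, algebraMap R L c ∈ V) (hX : algebraMap (Polynomial R) L Polynomial.X ∈ V)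
    (p : Polynomial R) : algebraMap (Polynomial R) L p ∈ V := by
  rw [← Polynomial.aeval_X_left_apply p, ← Polynomial.aeval_algebraMap_apply,
    Polynomial.aeval_eq_sum_range]
  exact sum_mem fun k _ => by
    rw [Algebra.smul_def]
    exact mul_mem (hR _) (pow_mem hX k)

end Valuation

section CommonZeros

variable {σ ι K : Type*} [Finite σ] [Field K]

/-- The polynomials `f j` have no common zero in affine space except, possibly, the origin.
It expresses both regularity at infinity and uniqueness of the critical point. -/
def CommonZerosTrivial (f : ι → MvPolynomial σ K) : Prop :=
  ∀ x : σ → K, (∀ j, eval x (f j) = 0) → x = 0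

theorem commonZerosTrivial_of_fin_two {f : Fin 2 → MvPolynomial (Fin 2) K}
    (hf : ∀ x y : K, eval ![x, y] (f 0) = 0 → eval ![x, y] (f 1) = 0 → x = 0 ∧ y = 0) :
    CommonZerosTrivial f := fun x hx => by
  have hx' : x = ![x 0, x 1] := List.ofFn_inj.mp rfl
  rw [hx'] at hx ⊢
  obtain ⟨h0, h1⟩ := hf _ _ (hx 0) (hx 1)
  simp [h0, h1]

variable [IsAlgClosed K] {f : ι → MvPolynomial σ K}

theorem CommonZerosTrivial.X_mem_radical (hf : CommonZerosTrivial f) (i : σ) :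
    X i ∈ (Ideal.span (Set.range f)).radical := by
  rw [← vanishingIdeal_zeroLocus_eq_radical (K := K), zeroLocus_span, mem_vanishingIdeal_iff]
  intro x hx
  have hx0 : x = 0 := hf x fun j => by simpa [aeval_eq_eval] using hx (f j) ⟨j, rfl⟩
  simp [hx0]

theorem CommonZerosTrivial.mem_of_aeval_mem (hf : CommonZerosTrivial f) {O : Type*} [CommRing O]
    [Algebra K O] {I : Ideal O} [hI : I.IsPrime] {x : σ → O}
    (hx : ∀ j, aeval x (f j) ∈ I) (i : σ) : x i ∈ I := by
  obtain ⟨N, hN⟩ := hf.X_mem_radical i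
  have hle : Ideal.span (Set.range f) ≤ I.comap (aeval (R := K) x) :=
    Ideal.span_le.mpr (Set.range_subset_iff.mpr hx)
  have hpow : x i ^ N ∈ I := by simpa using hle hN
  exact hI.mem_of_pow_mem N hpow

variable {L : Type*} [Field L] [Algebra K L]

section

variable {Γ₀ : Type*} [LinearOrderedCommGroupWithZero Γ₀] {v : Valuation L Γ₀}
  (hv : ∀ c : K, v (algebraMap K L c) ≤ 1) {x : σ → L} {i : σ} {n : ℕ}
include hv

theorem exists_one_le_valuation_aeval (hf : CommonZerosTrivial f) (hx : ∀ j, v (x j) ≤ 1)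
    (hi : x i = 1) : ∃ j, 1 ≤ v (aeval x (f j)) := by
  obtain ⟨N, hN⟩ := hf.X_mem_radical i
  by_contra! hlt
  have hspan : ∀ p ∈ Ideal.span (Set.range f), v (aeval x p) < 1 := fun p hp => by
    induction hp using Submodule.span_induction with
    | mem p hp =>
      obtain ⟨j, rfl⟩ := hp
      exact hlt j
    | zero => rw [map_zero, map_zero]; exact zero_lt_one
    | add p q _ _ hp hq => rw [map_add]; exact v.map_add_lt hp hq
    | smul a p _ hp =>
      have ha : v (aeval x a) ≤ 1 :=
        (valuation_aeval_le_pow hv le_rfl hx le_rfl).trans_eq (one_pow a.totalDegree)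
      rw [smul_eq_mul, map_mul, map_mul]
      exact (mul_le_of_le_one_left' ha).trans_lt hp
  simpa [hi] using hspan _ hN

theorem exists_pow_le_valuation_aeval_of_isHomogeneous (hhom : ∀ j, (f j).IsHomogeneous n)
    (hf : CommonZerosTrivial f) (hx : ∀ j, v (x j) ≤ v (x i)) (hi : x i ≠ 0) :
    ∃ j, v (x i) ^ n ≤ v (aeval x (f j)) := by
  have hy : ∀ j, v (((x i)⁻¹ • x) j) ≤ 1 := fun j => by
    rw [Pi.smul_apply, smul_eq_mul, map_mul, map_inv₀, inv_mul_le_one₀]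
    · exact hx j
    · exact (v.pos_iff).mpr hi
  obtain ⟨j, hj⟩ := exists_one_le_valuation_aeval hv hf hy (i := i) (inv_mul_cancel₀ hi)
  refine ⟨j, ?_⟩
  rwa [aeval_smul_of_isHomogeneous (hhom j), inv_pow, map_mul, map_inv₀, map_pow,
    le_inv_mul_iff₀, mul_one] at hj
  exact pow_pos ((v.pos_iff).mpr hi) n

theorem exists_pow_le_valuation_aeval (hn : 0 < n)
    (hdeg : ∀ j, (f j).totalDegree ≤ n)
    (hf : CommonZerosTrivial fun j => homogeneousComponent n (f j))
    (hx : ∀ j, v (x j) ≤ v (x i)) (hi : 1 < v (x i)) : ∃ j, v (x i) ^ n ≤ v (aeval x (f j)) := by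
  have hi0 : x i ≠ 0 := v.ne_zero_iff.mp (zero_lt_one.trans hi).ne'
  obtain ⟨j, hj⟩ := exists_pow_le_valuation_aeval_of_isHomogeneous hv
    (fun j => homogeneousComponent_isHomogeneous n (f j)) hf hx hi0
  have hrest : v (aeval x (f j - homogeneousComponent n (f j))) < v (x i) ^ n := by
    have hlt := totalDegree_sub_homogeneousComponent_lt (hdeg j) hn
    calc _ ≤ v (x i) ^ (n - 1) := valuation_aeval_le_pow hv hi.le hx (Nat.le_sub_one_of_lt hlt)
      _ < v (x i) ^ n := pow_lt_pow_right₀ hi (Nat.sub_one_lt_of_lt hn)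
  refine ⟨j, hj.trans_eq ?_⟩
  rw [← v.map_add_eq_of_lt_right (hrest.trans_le hj), ← map_add, sub_add_cancel]

theorem valuation_aeval_le_of_leadingForms (hn : 0 < n)
    (hdeg : ∀ j, (f j).totalDegree ≤ n)
    (hf : CommonZerosTrivial fun j => homogeneousComponent n (f j)) {γ : Γ₀} (hγ : 1 ≤ γ)
    (hx : ∀ j, v (aeval x (f j)) ≤ γ) {p : MvPolynomial σ K} (hp : p.totalDegree ≤ n) :
    v (aeval x p) ≤ γ := by
  by_cases hle : ∀ i, v (x i) ≤ 1
  · exact (valuation_aeval_le_pow hv le_rfl hle hp).trans ((one_pow n).trans_le hγ)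
  · push Not at hle
    obtain ⟨i, hi⟩ := hle
    have : Nonempty σ := ⟨i⟩
    obtain ⟨k, hk⟩ := Finite.exists_max fun j => v (x j)
    have hk1 : 1 < v (x k) := hi.trans_le (hk i)
    obtain ⟨j, hj⟩ := exists_pow_le_valuation_aeval hv hn hdeg hf hk hk1
    exact (valuation_aeval_le_pow hv hk1.le hk hp).trans (hj.trans (hx j))

end

theorem isIntegral_of_leadingForms {n : ℕ} (hn : 0 < n)
    (hdeg : ∀ j, (f j).totalDegree ≤ n)
    (hf : CommonZerosTrivial fun j => homogeneousComponent n (f j)) {R : Type*} [CommRing R]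
    [Algebra K R] [Algebra R L] [IsScalarTower K R L] (x : σ → L)
    (hx : ∀ j, ∃ r : R, algebraMap R L r = aeval x (f j)) (i : σ) : IsIntegral R (x i) := by
  refine isIntegral_of_forall_mem_valuationSubring fun V hV => ?_
  have hKV : ∀ c : K, V.valuation (algebraMap K L c) ≤ 1 := fun c => by
    rw [V.valuation_le_one_iff, IsScalarTower.algebraMap_apply K R L]
    exact hV _
  have hxV : ∀ j, V.valuation (aeval x (f j)) ≤ 1 := fun j => by
    obtain ⟨r, hr⟩ := hx j
    rw [← hr, V.valuation_le_one_iff]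
    exact hV r
  rw [← V.valuation_le_one_iff, ← aeval_X (R := K) x i]
  exact valuation_aeval_le_of_leadingForms hKV hn hdeg hf le_rfl hxV ((totalDegree_X i).trans_le hn)

end CommonZeros

section FiniteMap

variable {σ K : Type*} [Finite σ] [Field K] [IsAlgClosed K] {f : σ → MvPolynomial σ K} {n : ℕ}

theorem isIntegral_adjoin_of_leadingForms (hn : 0 < n)
    (hdeg : ∀ i, (f i).totalDegree ≤ n)
    (hf : CommonZerosTrivial fun i => homogeneousComponent n (f i)) :
    Algebra.IsIntegral (Algebra.adjoin K (Set.range f)) (MvPolynomial σ K) := by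
  let ι := algebraMap (MvPolynomial σ K) (FractionRing (MvPolynomial σ K))
  have hι : Function.Injective ι := FaithfulSMul.algebraMap_injective _ _
  have hX : ∀ i, IsIntegral (Algebra.adjoin K (Set.range f)) (X i : MvPolynomial σ K) := fun i => by
    rw [← isIntegral_algebraMap_iff hι]
    refine isIntegral_of_leadingForms hn hdeg hf (ι ∘ X) (fun j => ?_) i
    refine ⟨⟨f j, Algebra.subset_adjoin (Set.mem_range_self j)⟩, ?_⟩
    rw [aeval_algebraMap_apply, aeval_X_left_apply]
    rfl
  refine ⟨fun p => ?_⟩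
  induction p using MvPolynomial.induction_on with
  | C c => exact isIntegral_algebraMap (x := algebraMap K (Algebra.adjoin K (Set.range f)) c)
  | add p q hp hq => exact hp.add hq
  | mul_X p i hp => exact hp.mul (hX i)

theorem algebraicIndependent_of_leadingForms (hn : 0 < n)
    (hdeg : ∀ i, (f i).totalDegree ≤ n)
    (hf : CommonZerosTrivial fun i => homogeneousComponent n (f i)) : AlgebraicIndependent K f := by
  have := (isIntegral_adjoin_of_leadingForms hn hdeg hf).isAlgebraic
  refine (Algebra.IsAlgebraic.isTranscendenceBasis_of_lift_le_trdeg_of_finite K f ?_).1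
  rw [MvPolynomial.trdeg_of_isDomain]
  simp

theorem exists_eval_eq_of_leadingForms (hn : 0 < n)
    (hdeg : ∀ i, (f i).totalDegree ≤ n)
    (hf : CommonZerosTrivial fun i => homogeneousComponent n (f i)) (y : σ → K) :
    ∃ x : σ → K, ∀ i, eval x (f i) = y i := by
  have := isIntegral_adjoin_of_leadingForms hn hdeg hf
  have hind := algebraicIndependent_of_leadingForms hn hdeg hf
  let ψ : Algebra.adjoin K (Set.range f) →ₐ[K] K := (aeval y).comp hind.aevalEquiv.symm
  have hψ : ∀ i, hind.aevalEquiv (X i - C (y i)) ∈ RingHom.ker ψ := fun i => by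
    simp [ψ, RingHom.mem_ker]
  have : (RingHom.ker ψ).IsMaximal :=
    RingHom.ker_isMaximal_of_surjective ψ fun c => ⟨algebraMap K _ c, ψ.commutes c⟩
  obtain ⟨Q, hQ, hQψ⟩ := Ideal.exists_ideal_over_maximal_of_isIntegral (S := MvPolynomial σ K)
    (RingHom.ker ψ) (by simp)
  obtain ⟨x, rfl⟩ := isMaximal_iff_eq_vanishingIdeal_singleton.mp hQ
  refine ⟨x, fun i => ?_⟩
  have hx := hQψ.ge (hψ i)
  rw [Ideal.mem_comap, hind.algebraMap_aevalEquiv, mem_vanishingIdeal_singleton_iff] at hx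
  simpa [sub_eq_zero, aeval_eq_eval] using hx

theorem exists_aeval_eq_of_leadingForms (hn : 0 < n)
    (hdeg : ∀ i, (f i).totalDegree ≤ n)
    (hf : CommonZerosTrivial fun i => homogeneousComponent n (f i)) {L : Type*} [Field L]
    [IsAlgClosed L] [Algebra K L] (y : σ → L) : ∃ x : σ → L, ∀ i, aeval x (f i) = y i := by
  have hfL : CommonZerosTrivial fun i => homogeneousComponent n (map (algebraMap K L) (f i)) := by
    intro x hx
    refine funext fun i => hf.mem_of_aeval_mem (I := (⊥ : Ideal L)) (fun j => ?_) i
    rw [Submodule.mem_bot, aeval_def, ← eval_map, ← homogeneousComponent_map]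
    exact hx j
  obtain ⟨x, hx⟩ := exists_eval_eq_of_leadingForms hn
    (fun i => (totalDegree_map_le _ _).trans (hdeg i)) hfL y
  exact ⟨x, fun i => by rw [aeval_def, ← eval_map, hx i]⟩

theorem exists_dvd_aeval_of_leadingForms (hn : 0 < n)
    (hdeg : ∀ i, (f i).totalDegree ≤ n)
    (hf : CommonZerosTrivial fun i => homogeneousComponent n (f i)) {E : MvPolynomial σ K}
    (hE : E ≠ 0) : ∃ c : MvPolynomial σ K, c ≠ 0 ∧ E ∣ aeval f c := by
  have := isIntegral_adjoin_of_leadingForms hn hdeg hf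
  obtain ⟨⟨r, hr⟩, hr0, hdvd⟩ := (Algebra.IsIntegral.isIntegral
    (R := Algebra.adjoin K (Set.range f)) E).isAlgebraic.exists_nonzero_dvd
      (mem_nonZeroDivisors_of_ne_zero hE)
  obtain ⟨c, rfl⟩ := (Algebra.adjoin_range_eq_range_aeval K f).le hr
  refine ⟨c, ?_, hdvd⟩
  rintro rfl
  exact hr0 (Subtype.ext (map_zero (aeval f)))

end FiniteMap

section Arcs

variable {σ K : Type*} [CommRing K]

theorem X_pow_succ_dvd_of_X_pow_dvd_derivative [IsDomain K] [CharZero K] {q : Polynomial K}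
    {k : ℕ} (h0 : q.coeff 0 = 0) (hq : Polynomial.X ^ k ∣ Polynomial.derivative q) :
    Polynomial.X ^ (k + 1) ∣ q := by
  rw [Polynomial.X_pow_dvd_iff] at hq ⊢
  rintro (_ | d) hd
  · exact h0
  · have h := hq d (Nat.lt_of_succ_lt_succ hd)
    rw [Polynomial.coeff_derivative] at h
    exact (mul_eq_zero.mp h).resolve_right (by exact_mod_cast d.succ_ne_zero)

theorem derivation_aeval [Fintype σ] {A M : Type*} [CommRing A] [Algebra K A] [AddCommGroup M]
    [Module A M] [Module K M] (D : Derivation K A M) (x : σ → A) (H : MvPolynomial σ K) :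
    D (aeval x H) = ∑ i, aeval x (pderiv i H) • D (x i) := by
  classical
  induction H using MvPolynomial.induction_on with
  | C a => simp
  | add H₁ H₂ h₁ h₂ => simp only [map_add, h₁, h₂, add_smul, Finset.sum_add_distrib]
  | mul_X H j h =>
    have hX : ∑ i, (aeval x H * aeval x (pderiv i (X j : MvPolynomial σ K))) • D (x i) =
        aeval x H • D (x j) := by
      rw [Finset.sum_eq_single_of_mem j (Finset.mem_univ j), pderiv_X_self, map_one, mul_one]
      intro i _ hij
      rw [pderiv_X_of_ne hij.symm, map_zero, mul_zero, zero_smul]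
    simp only [pderiv_mul, map_add, map_mul, aeval_X, add_smul, Finset.sum_add_distrib, hX,
      D.leibniz, h, Finset.smul_sum, smul_smul, mul_comm (x j), add_comm]

theorem aeval_sub_aeval_mem {O : Type*} [CommRing O] [Algebra K O] {I : Ideal O} {x y : σ → O}
    (hxy : ∀ i, x i - y i ∈ I) (p : MvPolynomial σ K) : aeval x p - aeval y p ∈ I := by
  have hquot : ∀ z : σ → O, Ideal.Quotient.mk I (aeval z p) =
      eval₂ ((Ideal.Quotient.mk I).comp (algebraMap K O)) (fun i => Ideal.Quotient.mk I (z i)) p :=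
    fun z => eval₂_comp_left (Ideal.Quotient.mk I) (algebraMap K O) z p
  have hmk : (fun i => Ideal.Quotient.mk I (x i)) = fun i => Ideal.Quotient.mk I (y i) :=
    funext fun i => Ideal.Quotient.mk_eq_mk_iff_sub_mem _ _ |>.mpr (hxy i)
  rw [← Ideal.Quotient.mk_eq_mk_iff_sub_mem, hquot, hquot, hmk]

end Arcs

theorem eq_zero_of_algebraMap_mem {K O : Type*} [Field K] [CommRing O] [Algebra K O]
    {I : Ideal O} [I.IsPrime] {c : K} (hc : algebraMap K O c ∈ I) : c = 0 := by
  have hbot : I.comap (algebraMap K O) = ⊥ := Ideal.eq_bot_of_prime _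
  exact (Submodule.mem_bot K).mp (hbot.le hc)

section Uniformizer

open IsDedekindDomain WithZero

variable {K O : Type*} [Field K] [CommRing O] [IsDedekindDomain O] [Algebra K O]
  {v : HeightOneSpectrum O} {π : O} (hπ : v.intValuation π = exp (-1 : ℤ))
include hπ

theorem intValuation_uniformizer_pow (k : ℕ) : v.intValuation (π ^ k) = exp (-(k : ℤ)) := by
  rw [map_pow, hπ, ← exp_nsmul, nsmul_eq_mul, mul_neg_one]

theorem exists_sub_aeval_mem_pow (hres : ∀ y : O, ∃ c : K, y - algebraMap K O c ∈ v.asIdeal)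
    (y : O) (k : ℕ) : ∃ p : Polynomial K, y - Polynomial.aeval π p ∈ v.asIdeal ^ k := by
  induction k with
  | zero => exact ⟨0, by simp⟩
  | succ k ih =>
    obtain ⟨p, hp⟩ := ih
    have hmem : π ^ k ∈ v.asIdeal ^ k :=
      (v.intValuation_le_pow_iff_mem _ _).mp (intValuation_uniformizer_pow hπ k).le
    have hnotMem : π ^ k ∉ v.asIdeal ^ (k + 1) := by
      rw [← v.intValuation_le_pow_iff_mem, intValuation_uniformizer_pow hπ, exp_le_exp]
      lia
    obtain ⟨d, e, he, hde⟩ := Ideal.exists_mul_add_mem_pow_succ v.ne_bot _ _ hmem hnotMem hp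
    obtain ⟨c, hc⟩ := hres d
    refine ⟨p + Polynomial.C c * Polynomial.X ^ k, ?_⟩
    have hsplit : y - Polynomial.aeval π (p + Polynomial.C c * Polynomial.X ^ k) =
        π ^ k * (d - algebraMap K O c) + e := by
      simp only [map_add, map_mul, map_pow, Polynomial.aeval_C, Polynomial.aeval_X]
      linear_combination -hde
    rw [hsplit, pow_succ]
    exact add_mem (Ideal.mul_mem_mul hmem hc) (pow_succ v.asIdeal k ▸ he)

theorem X_pow_dvd_of_aeval_mem_pow {q : Polynomial K} {k : ℕ}
    (hq : Polynomial.aeval π q ∈ v.asIdeal ^ k) : Polynomial.X ^ k ∣ q := by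
  induction k generalizing q with
  | zero => exact one_dvd q
  | succ k ih =>
    have hdecomp := congrArg (Polynomial.aeval π) q.divX_mul_X_add
    rw [map_add, map_mul, Polynomial.aeval_X, Polynomial.aeval_C] at hdecomp
    have hπv : π ∈ v.asIdeal := by
      rw [← pow_one v.asIdeal, ← v.intValuation_le_pow_iff_mem, hπ, Nat.cast_one]
    have hq0 : q.coeff 0 = 0 := eq_zero_of_algebraMap_mem (I := v.asIdeal) <| by
      rw [← Ideal.add_mem_iff_right _ (Ideal.mul_mem_left _ _ hπv), hdecomp]
      exact Ideal.pow_le_self k.succ_ne_zero hq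
    rw [hq0, map_zero, add_zero] at hdecomp
    have hdivX : Polynomial.aeval π q.divX ∈ v.asIdeal ^ k := by
      rw [← hdecomp, ← v.intValuation_le_pow_iff_mem, map_mul, hπ] at hq
      rw [← v.intValuation_le_pow_iff_mem]
      rwa [Nat.cast_succ, neg_add, exp_add, mul_le_mul_iff_left₀ (by simp)] at hq
    obtain ⟨r, hr⟩ := ih hdivX
    refine ⟨r, ?_⟩
    rw [← q.divX_mul_X_add, hq0, hr, map_zero]
    ring

theorem exists_coeff_zero_sub_aeval_mem_pow
    (hres : ∀ y : O, ∃ c : K, y - algebraMap K O c ∈ v.asIdeal) {y : O} (hy : y ∈ v.asIdeal)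
    {k : ℕ} (hk : k ≠ 0) :
    ∃ p : Polynomial K, p.coeff 0 = 0 ∧ y - Polynomial.aeval π p ∈ v.asIdeal ^ k := by
  obtain ⟨p, hp⟩ := exists_sub_aeval_mem_pow hπ hres y k
  have hpv : Polynomial.aeval π p ∈ v.asIdeal ^ 1 := by
    simpa only [sub_sub_cancel, pow_one] using sub_mem hy (Ideal.pow_le_self hk hp)
  exact ⟨p, by simpa using Polynomial.X_pow_dvd_iff.mp (X_pow_dvd_of_aeval_mem_pow hπ hpv) 0, hp⟩

omit hπ in
/-- Along an arc through the origin `d(H ∘ x) = ∑ (∂H/∂xᵢ ∘ x) dxᵢ`, so integrating raises the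
order of vanishing by one. -/
theorem aeval_mem_pow_succ_of_aeval_pderiv_mem_pow [CharZero K] {σ : Type*} [Finite σ]
    (hres : ∀ y : O, ∃ c : K, y - algebraMap K O c ∈ v.asIdeal) {H : MvPolynomial σ K}
    (h0 : eval 0 H = 0) {x : σ → O} (hx : ∀ i, x i ∈ v.asIdeal) {k : ℕ}
    (hk : ∀ i, aeval x (pderiv i H) ∈ v.asIdeal ^ k) : aeval x H ∈ v.asIdeal ^ (k + 1) := by
  have := Fintype.ofFinite σ
  obtain ⟨π, hπ⟩ := v.intValuation_exists_uniformizer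
  choose p hp0 hp using fun i => exists_coeff_zero_sub_aeval_mem_pow hπ hres (hx i) k.succ_ne_zero
  have hderiv : Polynomial.X ^ k ∣ Polynomial.derivative (aeval p H) := by
    rw [show Polynomial.derivative (aeval p H) = _ from derivation_aeval Polynomial.derivative' p H]
    refine Finset.dvd_sum fun i _ => dvd_mul_of_dvd_left ?_ _
    apply X_pow_dvd_of_aeval_mem_pow hπ
    have hcongr := Ideal.pow_le_pow_right k.le_succ (aeval_sub_aeval_mem hp (pderiv i H))
    simpa only [comp_aeval_apply, sub_sub_cancel] using sub_mem (hk i) hcongr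
  have hcoeff : (aeval p H).coeff 0 = 0 := by
    have hp0' : (fun i => Polynomial.aeval (0 : K) (p i)) = 0 :=
      funext fun i => by rw [← Polynomial.coeff_zero_eq_aeval_zero, hp0, Pi.zero_apply]
    rw [Polynomial.coeff_zero_eq_aeval_zero, comp_aeval_apply, hp0', aeval_eq_eval, h0]
  obtain ⟨r, hr⟩ := X_pow_succ_dvd_of_X_pow_dvd_derivative hcoeff hderiv
  have harc : Polynomial.aeval π (aeval p H) ∈ v.asIdeal ^ (k + 1) := by
    rw [hr, map_mul]
    refine Ideal.mul_mem_right _ _ ?_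
    rw [map_pow, Polynomial.aeval_X, ← v.intValuation_le_pow_iff_mem,
      intValuation_uniformizer_pow hπ]
  rw [comp_aeval_apply] at harc
  simpa only [sub_add_cancel] using add_mem (aeval_sub_aeval_mem hp H) harc

end Uniformizer

section Curve

open IsDedekindDomain

theorem mem_range_algebraMap_of_isIntegral {K B : Type*} [Field K] [IsAlgClosed K] [CommRing B]
    [IsDomain B] [Algebra K B] {b : B} (hb : IsIntegral K b) : b ∈ Set.range (algebraMap K B) := by
  obtain ⟨c, hc⟩ :=
    (IsAlgClosed.algebraMap_bijective_of_isIntegral (k := K) (K := integralClosure K B)).2 ⟨b, hb⟩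
  exact ⟨c, congrArg Subtype.val hc⟩

theorem dvd_of_forall_intValuation_le {O : Type*} [CommRing O] [IsDedekindDomain O] {a b : O}
    (ha : a ≠ 0) (h : ∀ v : HeightOneSpectrum O, v.intValuation b ≤ v.intValuation a) : a ∣ b := by
  have ha' : algebraMap O (FractionRing O) a ≠ 0 :=
    (FaithfulSMul.algebraMap_eq_zero_iff O (FractionRing O)).not.mpr ha
  obtain ⟨e, he⟩ := HeightOneSpectrum.mem_integers_of_valuation_le_one (FractionRing O)
    (algebraMap O (FractionRing O) b / algebraMap O (FractionRing O) a) fun v => by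
      rw [map_div₀, div_le_one₀ ((Valuation.pos_iff _).mpr ha'),
        HeightOneSpectrum.valuation_of_algebraMap, HeightOneSpectrum.valuation_of_algebraMap]
      exact h v
  refine ⟨e, FaithfulSMul.algebraMap_injective O (FractionRing O) ?_⟩
  rw [map_mul, he, mul_div_cancel₀ _ ha']

theorem exists_X_mem_heightOneSpectrum {K O : Type*} [Field K] [CommRing O] [IsDedekindDomain O]
    [Algebra (Polynomial K) O] [Algebra.IsIntegral (Polynomial K) O]
    [FaithfulSMul (Polynomial K) O] :
    ∃ v : HeightOneSpectrum O, algebraMap (Polynomial K) O Polynomial.X ∈ v.asIdeal := by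
  have hker : RingHom.ker (algebraMap (Polynomial K) O) ≤ Ideal.span {Polynomial.X} :=
    ((RingHom.injective_iff_ker_eq_bot _).mp (FaithfulSMul.algebraMap_injective _ _)).trans_le
      bot_le
  have : (Ideal.span {(Polynomial.X : Polynomial K)}).IsPrime :=
    (Ideal.span_singleton_prime Polynomial.X_ne_zero).mpr Polynomial.prime_X
  obtain ⟨Q, hQ, hQX⟩ := Ideal.exists_ideal_over_prime_of_isIntegral_of_isDomain _ hker
  have hmem : algebraMap (Polynomial K) O Polynomial.X ∈ Q := by
    rw [← Ideal.mem_comap, hQX]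
    exact Ideal.mem_span_singleton_self _
  refine ⟨⟨Q, hQ, ?_⟩, hmem⟩
  rintro rfl
  exact Polynomial.X_ne_zero
    ((FaithfulSMul.algebraMap_eq_zero_iff (Polynomial K) O).mp ((Submodule.mem_bot O).mp hmem))

variable {K O : Type*} [Field K] [IsAlgClosed K] [CommRing O] [Algebra K O]

theorem exists_sub_algebraMap_mem [Algebra (Polynomial K) O] [IsScalarTower K (Polynomial K) O]
    [Algebra.IsIntegral (Polynomial K) O] {I : Ideal O} [I.IsPrime]
    (hX : algebraMap (Polynomial K) O Polynomial.X ∈ I) (y : O) :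
    ∃ c : K, y - algebraMap K O c ∈ I := by
  have hcomp : (Ideal.Quotient.mk I).comp (algebraMap (Polynomial K) O) =
      (algebraMap K (O ⧸ I)).comp (Polynomial.evalRingHom 0) := by
    refine Polynomial.ringHom_ext (fun c => ?_) ?_
    · rw [RingHom.comp_apply, RingHom.comp_apply, Polynomial.coe_evalRingHom, Polynomial.eval_C,
        ← Polynomial.algebraMap_eq, ← IsScalarTower.algebraMap_apply, Ideal.Quotient.mk_algebraMap]
    · rw [RingHom.comp_apply, RingHom.comp_apply, Polynomial.coe_evalRingHom, Polynomial.eval_X,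
        map_zero, Ideal.Quotient.eq_zero_iff_mem.mpr hX]
  have hy : IsIntegral K (Ideal.Quotient.mk I y) := RingHom.IsIntegralElem.of_comp <|
    hcomp ▸ RingHom.IsIntegralElem.map (Algebra.IsIntegral.isIntegral y) (Ideal.Quotient.mk I)
  obtain ⟨c, hc⟩ := mem_range_algebraMap_of_isIntegral hy
  exact ⟨c, (Ideal.Quotient.mk_eq_mk_iff_sub_mem _ _).mp hc.symm⟩

variable [CharZero K] [IsDedekindDomain O] {σ : Type*} [Fintype σ] {H : MvPolynomial σ K}

theorem intValuation_aeval_eulerDefect_lt {v : HeightOneSpectrum O}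
    (hres : ∀ y : O, ∃ c : K, y - algebraMap K O c ∈ v.asIdeal)
    (honly : CommonZerosTrivial fun i => pderiv i H) (h0 : eval 0 H = 0) {x : σ → O} {s : O}
    (hs : s ≠ 0) (hsv : s ∈ v.asIdeal) (hx : ∀ i, s ∣ aeval x (pderiv i H)) (d : ℕ) :
    v.intValuation (aeval x (eulerDefect d H)) < v.intValuation s := by
  obtain ⟨k, hk⟩ : ∃ k : ℕ, v.intValuation s = WithZero.exp (-(k : ℤ)) :=
    ⟨_, v.intValuation_if_neg hs⟩
  have hsk : s ∈ v.asIdeal ^ k := (v.intValuation_le_pow_iff_mem s k).mp hk.le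
  have hgrad : ∀ i, aeval x (pderiv i H) ∈ v.asIdeal ^ k :=
    fun i => Ideal.mem_of_dvd _ (hx i) hsk
  have hxv : ∀ i, x i ∈ v.asIdeal :=
    honly.mem_of_aeval_mem fun j => Ideal.mem_of_dvd _ (hx j) hsv
  have hE : aeval x (eulerDefect d H) ∈ v.asIdeal ^ (k + 1) := by
    simp only [eulerDefect, map_sub, map_mul, map_sum, aeval_X]
    refine sub_mem (Ideal.mul_mem_left _ _
      (aeval_mem_pow_succ_of_aeval_pderiv_mem_pow hres h0 hxv hgrad)) (sum_mem fun i _ => ?_)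
    rw [pow_succ']
    exact Ideal.mul_mem_mul (hxv i) (hgrad i)
  refine ((v.intValuation_le_pow_iff_mem _ _).mpr hE).trans_lt ?_
  rw [hk, WithZero.exp_lt_exp]
  lia

theorem exists_aeval_eulerDefect_eq_mul {s : O} (hs : s ≠ 0)
    (hres : ∀ v : HeightOneSpectrum O, s ∈ v.asIdeal →
      ∀ y : O, ∃ c : K, y - algebraMap K O c ∈ v.asIdeal)
    (honly : CommonZerosTrivial fun i => pderiv i H) (h0 : eval 0 H = 0) {x : σ → O}
    (hx : ∀ i, s ∣ aeval x (pderiv i H)) (d : ℕ) :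
    ∃ e, aeval x (eulerDefect d H) = s * e ∧
      ∀ v : HeightOneSpectrum O, s ∈ v.asIdeal → e ∈ v.asIdeal := by
  have hlt := fun (v : HeightOneSpectrum O) hsv =>
    intValuation_aeval_eulerDefect_lt (hres v hsv) honly h0 hs hsv hx d
  obtain ⟨e, he⟩ := dvd_of_forall_intValuation_le hs fun v => by
    by_cases hsv : s ∈ v.asIdeal
    · exact (hlt v hsv).le
    · rw [HeightOneSpectrum.intValuation_eq_one_iff.mpr hsv]
      exact v.intValuation_le_one _
  refine ⟨e, he, fun v hsv => ?_⟩
  have h := hlt v hsv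
  rw [he, map_mul] at h
  rw [← v.intValuation_lt_one_iff_mem]
  exact lt_of_mul_lt_mul_left' (h.trans_eq (mul_one _).symm)

end Curve

section GradientLine

variable {σ K : Type*} [Field K] [IsAlgClosed K] {n : ℕ} {H : MvPolynomial σ K}
  (hn : 0 < n) (hdeg : H.totalDegree ≤ n + 1)
  (hreg : CommonZerosTrivial fun i => homogeneousComponent n (pderiv i H))
include hn hdeg hreg

theorem isIntegral_of_aeval_pderiv_eq_mul [Finite σ] {L : Type*} [Field L] [Algebra K L]
    [Algebra (Polynomial K) L] [IsScalarTower K (Polynomial K) L] {x : σ → L} {w : σ → K}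
    (hx : ∀ i, aeval x (pderiv i H) =
      algebraMap K L (w i) * algebraMap (Polynomial K) L Polynomial.X) (i : σ) :
    IsIntegral (Polynomial K) (x i) := by
  refine isIntegral_of_leadingForms hn (fun j => totalDegree_pderiv_le j hdeg) hreg x
    (fun j => ?_) i
  refine ⟨algebraMap K (Polynomial K) (w j) * Polynomial.X, ?_⟩
  rw [hx, map_mul, ← IsScalarTower.algebraMap_apply]

variable [Fintype σ]

section AffineCurve

variable {O : Type*} [CommRing O] [Algebra K O] [Algebra (Polynomial K) O]
  [IsScalarTower K (Polynomial K) O] [Algebra.IsIntegral (Polynomial K) O]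

theorem isIntegral_of_aeval_eulerDefect_eq_mul [IsDomain O] {x : σ → O} {w : σ → K} {s : O}
    (hX : algebraMap (Polynomial K) O Polynomial.X = s)
    (hx : ∀ i, aeval x (pderiv i H) = algebraMap K O (w i) * s) {e : O}
    (he : aeval x (eulerDefect (n + 1) H) = s * e) : IsIntegral K e := by
  let L := FractionRing O
  have hinj : Function.Injective (algebraMap O L) := FaithfulSMul.algebraMap_injective O L
  refine (isIntegral_algHom_iff (IsScalarTower.toAlgHom K O L) hinj).mp ?_
  refine isIntegral_of_forall_mem_valuationSubring fun V hV => ?_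
  rw [IsScalarTower.coe_toAlgHom']
  -- `s ∈ V` are the finite places of the curve, `s ∉ V` those above the point at infinity.
  by_cases hsV : algebraMap O L s ∈ V
  · refine mem_valuationSubring_of_isIntegral (R := Polynomial K)
      (algebraMap_polynomial_mem_valuationSubring hV ?_)
      ((Algebra.IsIntegral.isIntegral e).algebraMap)
    rwa [IsScalarTower.algebraMap_apply (Polynomial K) O L, hX]
  · have hv : ∀ c : K, V.valuation (algebraMap K L c) ≤ 1 :=
      fun c => (V.valuation_le_one_iff _).mpr (hV c)
    have hγ : 1 ≤ V.valuation (algebraMap O L s) := by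
      rw [← V.valuation_le_one_iff, not_le] at hsV
      exact hsV.le
    have hgrad : ∀ i, V.valuation (aeval (algebraMap O L ∘ x) (pderiv i H)) ≤
        V.valuation (algebraMap O L s) := fun i => by
      rw [aeval_algebraMap_apply, hx, map_mul, map_mul, ← IsScalarTower.algebraMap_apply]
      exact mul_le_of_le_one_left' (hv _)
    have hle := valuation_aeval_le_of_leadingForms hv hn (fun i => totalDegree_pderiv_le i hdeg)
      hreg hγ hgrad (totalDegree_eulerDefect_le hdeg)
    rw [aeval_algebraMap_apply, he, map_mul, map_mul] at hle
    rw [← V.valuation_le_one_iff]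
    exact le_of_mul_le_mul_left (hle.trans_eq (mul_one _).symm) (zero_lt_one.trans_le hγ)

variable [CharZero K] (honly : CommonZerosTrivial fun i => pderiv i H) (h0 : eval 0 H = 0)
include honly h0

theorem aeval_eulerDefect_eq_zero [IsDedekindDomain O] [FaithfulSMul (Polynomial K) O] {x : σ → O}
    {w : σ → K} (hx : ∀ i, aeval x (pderiv i H) =
      algebraMap K O (w i) * algebraMap (Polynomial K) O Polynomial.X) :
    aeval x (eulerDefect (n + 1) H) = 0 := by
  have hs : algebraMap (Polynomial K) O Polynomial.X ≠ 0 :=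
    (FaithfulSMul.algebraMap_eq_zero_iff (Polynomial K) O).not.mpr Polynomial.X_ne_zero
  obtain ⟨e, he, hev⟩ := exists_aeval_eulerDefect_eq_mul hs
    (fun _ hsv => exists_sub_algebraMap_mem hsv) honly h0
    (fun i => hx i ▸ dvd_mul_left _ _) (n + 1)
  obtain ⟨c, rfl⟩ := mem_range_algebraMap_of_isIntegral
    (isIntegral_of_aeval_eulerDefect_eq_mul hn hdeg hreg rfl hx he)
  obtain ⟨v, hv⟩ := exists_X_mem_heightOneSpectrum (K := K) (O := O)
  rw [he, eq_zero_of_algebraMap_mem (hev v hv), map_zero, mul_zero]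

end AffineCurve

section FunctionField

variable [CharZero K] {L : Type*} [Field L] [Algebra K L] [Algebra (Polynomial K) L]
  [IsScalarTower K (Polynomial K) L] [Algebra (FractionRing (Polynomial K)) L]
  [IsScalarTower (Polynomial K) (FractionRing (Polynomial K)) L]
  (honly : CommonZerosTrivial fun i => pderiv i H) (h0 : eval 0 H = 0)
include honly h0

theorem aeval_eulerDefect_eq_zero_of_finiteDimensional
    [FiniteDimensional (FractionRing (Polynomial K)) L] {x : σ → L} {w : σ → K}
    (hx : ∀ i, aeval x (pderiv i H) =
      algebraMap K L (w i) * algebraMap (Polynomial K) L Polynomial.X) :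
    aeval x (eulerDefect (n + 1) H) = 0 := by
  let O := integralClosure (Polynomial K) L
  let y : σ → O := fun i => ⟨x i, isIntegral_of_aeval_pderiv_eq_mul hn hdeg hreg hx i⟩
  have hO : aeval y (eulerDefect (n + 1) H) = 0 := by
    have : FaithfulSMul (Polynomial K) L := .trans (Polynomial K) (FractionRing (Polynomial K)) L
    refine aeval_eulerDefect_eq_zero hn hdeg hreg honly h0 (w := w) fun i => ?_
    apply FaithfulSMul.algebraMap_injective O L
    rw [← aeval_algebraMap_apply]
    exact hx i
  have hL := congrArg (algebraMap O L) hO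
  rwa [← aeval_algebraMap_apply, map_zero] at hL

theorem aeval_eulerDefect_eq_zero_of_field {x : σ → L} {w : σ → K}
    (hx : ∀ i, aeval x (pderiv i H) =
      algebraMap K L (w i) * algebraMap (Polynomial K) L Polynomial.X) :
    aeval x (eulerDefect (n + 1) H) = 0 := by
  have : IsScalarTower K (FractionRing (Polynomial K)) L := .to₁₃₄ K (Polynomial K) _ L
  let F := IntermediateField.adjoin (FractionRing (Polynomial K)) (Set.range x)
  have : FiniteDimensional (FractionRing (Polynomial K)) F :=
    IntermediateField.finiteDimensional_adjoin <| Set.forall_mem_range.mpr fun i =>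
      (isIntegral_of_aeval_pderiv_eq_mul hn hdeg hreg hx i).tower_top
  have : IsScalarTower K F L := .of_algebraMap_eq fun _ => rfl
  have : IsScalarTower K (Polynomial K) F := .of_algebraMap_eq fun c =>
    Subtype.ext (IsScalarTower.algebraMap_apply K (Polynomial K) L c)
  let y : σ → F := fun i => ⟨x i, IntermediateField.subset_adjoin _ _ (Set.mem_range_self i)⟩
  have hF : aeval y (eulerDefect (n + 1) H) = 0 := by
    refine aeval_eulerDefect_eq_zero_of_finiteDimensional hn hdeg hreg honly h0 (w := w) fun i => ?_
    apply FaithfulSMul.algebraMap_injective F L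
    rw [← aeval_algebraMap_apply]
    exact hx i
  have hL := congrArg (algebraMap F L) hF
  rwa [← aeval_algebraMap_apply, map_zero] at hL

theorem eval_eq_zero_of_eulerDefect_dvd {c : MvPolynomial σ K}
    (hdvd : eulerDefect (n + 1) H ∣ aeval (fun i => pderiv i H) c) (w : σ → K) :
    eval w c = 0 := by
  let L := AlgebraicClosure (FractionRing (Polynomial K))
  have : FaithfulSMul (Polynomial K) L := .trans (Polynomial K) (FractionRing (Polynomial K)) L
  let line : σ → Polynomial K := fun i => algebraMap K (Polynomial K) (w i) * Polynomial.X
  obtain ⟨x, hx⟩ := exists_aeval_eq_of_leadingForms hn (fun i => totalDegree_pderiv_le i hdeg)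
    hreg (algebraMap (Polynomial K) L ∘ line)
  have hxw : ∀ i, aeval x (pderiv i H) =
      algebraMap K L (w i) * algebraMap (Polynomial K) L Polynomial.X := fun i => by
    rw [hx, Function.comp_apply, map_mul, ← IsScalarTower.algebraMap_apply]
  have hline : aeval line c = 0 := by
    apply FaithfulSMul.algebraMap_injective (Polynomial K) L
    obtain ⟨q, hq⟩ := hdvd
    calc algebraMap (Polynomial K) L (aeval line c)
        = aeval x (aeval (fun i => pderiv i H) c) := by
          rw [← aeval_algebraMap_apply, comp_aeval_apply, funext hx]
      _ = algebraMap (Polynomial K) L 0 := by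
          rw [hq, map_mul, aeval_eulerDefect_eq_zero_of_field hn hdeg hreg honly h0 hxw,
            zero_mul, map_zero]
  simpa [line, comp_aeval_apply, aeval_eq_eval] using congrArg (Polynomial.aeval (1 : K)) hline

end FunctionField

end GradientLine

theorem stmt12_general {σ K : Type*} [Finite σ] [Field K] [IsAlgClosed K] [CharZero K] {n : ℕ}
    (hn : 1 ≤ n) {H : MvPolynomial σ K} (hdeg : H.totalDegree ≤ n + 1)
    (hreg : CommonZerosTrivial fun i => pderiv i (homogeneousComponent (n + 1) H))
    (h0 : eval 0 H = 0) (honly : CommonZerosTrivial fun i => pderiv i H) :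
    H = homogeneousComponent (n + 1) H := by
  have := Fintype.ofFinite σ
  simp only [← homogeneousComponent_pderiv] at hreg
  refine (homogeneousComponent_eq_self (isHomogeneous_of_eulerDefect_eq_zero ?_)).symm
  by_contra hE
  obtain ⟨c, hc, hdvd⟩ := exists_dvd_aeval_of_leadingForms hn
    (fun i => totalDegree_pderiv_le i hdeg) hreg hE
  refine hc (MvPolynomial.funext fun w => ?_)
  rw [eval_eq_zero_of_eulerDefect_dvd hn hdeg hreg honly h0 hdvd w, map_zero]

/-- Lemma: a unique critical point at the origin forces
homogeneity.  A bivariate polynomial of degree `n+1` regular at infinity,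
vanishing at the origin and having the origin as its unique complex critical
point, is homogeneous: it coincides with its principal homogeneous part. -/
theorem stmt12 (n : ℕ) (hn : 1 ≤ n) (H : MvPolynomial (Fin 2) ℂ)
    (hdeg : H.totalDegree = n + 1) (hreg : RegularAtInfinity n H)
    (h0 : eval ![0, 0] H = 0)
    (hcrit0 : eval ![(0 : ℂ), 0] (pderiv 0 H) = 0 ∧ eval ![(0 : ℂ), 0] (pderiv 1 H) = 0)
    (honly : ∀ x₀ y₀ : ℂ, eval ![x₀, y₀] (pderiv 0 H) = 0 →
      eval ![x₀, y₀] (pderiv 1 H) = 0 → x₀ = 0 ∧ y₀ = 0) :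
    H = homogeneousComponent (n + 1) H :=
  stmt12_general hn hdeg.le (commonZerosTrivial_of_fin_two hreg)
    ((by simp : ![(0 : ℂ), 0] = 0) ▸ h0) (commonZerosTrivial_of_fin_two honly)
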